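/- arXiv:1708.04456 — 3 statements merged into one kernel-verified Lean document; each statement's English description precedes it below -/
import Mathlib

section
/- Let X be a complex Hilbert space, let A ∈ B(X) be a bounded self-adjoint operator, and let X_1 ⊆ X_2 ⊆ X_3 ⊆ ⋯ be finite-dimensional subspaces of X whose union is dense in X. Define A_n := P_{X_n} A P_{X_n} (the compression of A to X_n, a bounded self-adjoint finite-rank operator on X, so R(A_n) is closed). Then the following are equivalent: (i) D(A†) = X (equivalently, R(A) is closed) and A_n† y → A† y in norm for every y ∈ X; (ii) sup_n ‖A_n†‖ < +∞. -/
/-!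
If `Bₙ y` converges for every `y`, the norms `‖Bₙ‖` are bounded by Banach–Steinhaus.

Conversely let `‖Bₙ‖ ≤ M`. Since `Pₙ → 1` strongly, `Aₙ → A` strongly. Two identities valid for a
self-adjoint operator `T` and its Moore–Penrose inverse `B`, namely `B T T = T` and `B = B B T`,
give convergence on the range and on the kernel of `A`:

* `Bₙ Aₙ (A x) = Bₙ Aₙ (A x - Aₙ x) + Aₙ x → A x`, and `Bₙ Aₙ z → 0` whenever `A z = 0`;
  as `R(A) + N(A)` is dense and `Bₙ Aₙ` is uniformly bounded, `Bₙ Aₙ x` converges for every `x`;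
* hence `Bₙ (A x) = Bₙ (A x - Aₙ x) + Bₙ Aₙ x` converges, and `Bₙ z = Bₙ Bₙ Aₙ z → 0` whenever
  `A z = 0`; by the same density argument `Bₙ y` converges for every `y`.

The limit satisfies the defining relations of the Moore–Penrose inverse of `A` because they pass to
the limit, and an everywhere-defined Moore–Penrose inverse forces the range to be closed.
-/

open Filter Topology
open scoped InnerProductSpace

variable {X : Type*} [NormedAddCommGroup X] [InnerProductSpace ℂ X] [CompleteSpace X]

/-- `B` is the Moore–Penrose inverse of the (everywhere-defined) bounded operator `T`:
for every `y`, `B y ⟂ N(T)` and `T (B y) = P_{cl R(T)} y`, the latter being expressed by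
`T (B y) ∈ R(T)` together with `y - T (B y) ⟂ R(T)`.  The existence of such an
everywhere-defined `B` encodes `D(T†) = X`. -/
def IsMoorePenroseInvB (T : X →L[ℂ] X) (B : X → X) : Prop :=
  ∀ y : X,
    (∀ z : X, T z = 0 → ⟪B y, z⟫_ℂ = 0) ∧
    (∀ w : X, ⟪y - T (B y), T w⟫_ℂ = 0)

/-- `P` is the orthogonal projection of `X` onto the subspace `K`:
`P x ∈ K` and `x - P x ⟂ K` for every `x`. -/
def IsOrthProjOn (K : Set X) (P : X → X) : Prop :=
  ∀ x : X, P x ∈ K ∧ ∀ z ∈ K, ⟪x - P x, z⟫_ℂ = 0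

section MoorePenrose

variable {T : X →L[ℂ] X} {B : X → X}

/-- `T B T = T`. -/
lemma IsMoorePenroseInvB.map_inv_map (h : IsMoorePenroseInvB T B) (x : X) :
    T (B (T x)) = T x := by
  have h1 := (h (T x)).2 (x - B (T x))
  rw [map_sub, inner_self_eq_zero, sub_eq_zero] at h1
  exact h1.symm

/-- `B y` is determined by its image under `T`, since it lies in `N(T)ᗮ`, where `T` is injective. -/
lemma IsMoorePenroseInvB.eq_inv (h : IsMoorePenroseInvB T B) {u y : X}
    (hu : ∀ z, T z = 0 → ⟪u, z⟫_ℂ = 0) (hT : T u = T (B y)) : B y = u := by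
  have h0 : T (B y - u) = 0 := by rw [map_sub, hT, sub_self]
  have h1 : ⟪B y - u, B y - u⟫_ℂ = 0 := by
    rw [inner_sub_left, (h y).1 _ h0, hu _ h0, sub_zero]
  exact sub_eq_zero.1 (inner_self_eq_zero.1 h1)

lemma inner_map_eq_zero_of_map_eq_zero (hT : ∀ x y, ⟪T x, y⟫_ℂ = ⟪x, T y⟫_ℂ) (x : X) {z : X}
    (hz : T z = 0) : ⟪T x, z⟫_ℂ = 0 := by
  rw [hT, hz, inner_zero_right]

lemma map_eq_zero_of_inner_map_eq_zero (hT : ∀ x y, ⟪T x, y⟫_ℂ = ⟪x, T y⟫_ℂ) {u : X}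
    (hu : ∀ w, ⟪u, T w⟫_ℂ = 0) : T u = 0 := by
  rw [← inner_self_eq_zero (𝕜 := ℂ), hT, hu]

/-- `B T T = T` for symmetric `T`. -/
lemma IsMoorePenroseInvB.inv_map_map (h : IsMoorePenroseInvB T B)
    (hT : ∀ x y, ⟪T x, y⟫_ℂ = ⟪x, T y⟫_ℂ) (x : X) : B (T (T x)) = T x :=
  h.eq_inv (fun _ hz => inner_map_eq_zero_of_map_eq_zero hT x hz) (h.map_inv_map _).symm

/-- `T B = B T` for symmetric `T`: both are the orthogonal projection onto the range of `T`. -/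
lemma IsMoorePenroseInvB.comm (h : IsMoorePenroseInvB T B)
    (hT : ∀ x y, ⟪T x, y⟫_ℂ = ⟪x, T y⟫_ℂ) (x : X) : B (T x) = T (B x) := by
  refine h.eq_inv (fun _ hz => inner_map_eq_zero_of_map_eq_zero hT _ hz) ?_
  have h1 := map_eq_zero_of_inner_map_eq_zero hT (h x).2
  rw [map_sub, sub_eq_zero] at h1
  rw [h.map_inv_map, h1]

/-- `B = B B T` for symmetric `T`. -/
lemma IsMoorePenroseInvB.inv_inv_map (h : IsMoorePenroseInvB T B)
    (hT : ∀ x y, ⟪T x, y⟫_ℂ = ⟪x, T y⟫_ℂ) (x : X) : B (B (T x)) = B x := by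
  rw [h.comm hT x]
  exact h.eq_inv (h x).1 (h.map_inv_map _).symm

/-- An operator with an everywhere-defined Moore–Penrose inverse has closed range: for `y` in the
closure of the range, `y - T (B y)` lies in that closure and is orthogonal to it. -/
lemma IsMoorePenroseInvB.isClosed_range (h : IsMoorePenroseInvB T B) :
    IsClosed (Set.range T) := by
  refine isClosed_of_closure_subset fun y hy => ⟨B y, ?_⟩
  have hcl : closure (Set.range T) ⊆ {v | ⟪y - T (B y), v⟫_ℂ = 0} := by
    refine closure_minimal ?_ (isClosed_eq (by fun_prop) continuous_const)
    rintro _ ⟨w, rfl⟩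
    exact (h y).2 w
  have h1 : ⟪y - T (B y), y⟫_ℂ = 0 := hcl hy
  have h2 : ⟪y - T (B y), y - T (B y)⟫_ℂ = 0 := by
    rw [inner_sub_right, h1, (h y).2, sub_zero]
  exact (sub_eq_zero.1 (inner_self_eq_zero.1 h2)).symm

end MoorePenrose

/-- For uniformly bounded operators, pointwise Cauchyness extends from a set to its closure. -/
lemma cauchySeq_apply_of_mem_closure {F : ℕ → X →L[ℂ] X} {C : ℝ} (hF : ∀ n, ‖F n‖ ≤ C)
    {S : Set X} (hS : ∀ s ∈ S, CauchySeq fun n => F n s) {x : X} (hx : x ∈ closure S) :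
    CauchySeq fun n => F n x := by
  have hC : 0 ≤ C := (norm_nonneg _).trans (hF 0)
  rw [Metric.cauchySeq_iff']
  intro ε hε
  obtain ⟨s, hs, hd⟩ := Metric.mem_closure_iff.1 hx (ε / (3 * (C + 1))) (by positivity)
  obtain ⟨N, hN⟩ := Metric.cauchySeq_iff'.1 (hS s hs) (ε / 3) (by positivity)
  have key : ∀ n, dist (F n x) (F n s) < ε / 3 := fun n => by
    rw [dist_eq_norm, ← map_sub]
    rw [dist_eq_norm, lt_div_iff₀ (by positivity)] at hd
    have := (F n).le_of_opNorm_le (hF n) (x - s)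
    nlinarith [norm_nonneg (x - s)]
  refine ⟨N, fun n hn => ?_⟩
  have h1 := dist_triangle4 (F n x) (F n s) (F N s) (F N x)
  have h2 := key N
  rw [dist_comm] at h2
  linarith [key n, hN n hn]

/-- For symmetric `A` the subspace `R(A) + N(A)` is dense, so for uniformly bounded operators
pointwise Cauchyness need only be checked on `R(A)` and on `N(A)`. -/
lemma cauchySeq_apply_of_range_of_ker {A : X →L[ℂ] X} (hA : ∀ x y, ⟪A x, y⟫_ℂ = ⟪x, A y⟫_ℂ)
    {F : ℕ → X →L[ℂ] X} {C : ℝ} (hF : ∀ n, ‖F n‖ ≤ C)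
    (hR : ∀ x, CauchySeq fun n => F n (A x))
    (hN : ∀ z, A z = 0 → CauchySeq fun n => F n z) (y : X) : CauchySeq fun n => F n y := by
  let K : Submodule ℂ X := (LinearMap.range (A : X →ₗ[ℂ] X)).topologicalClosure
  have h1 : CauchySeq fun n => F n (K.starProjection y) := by
    refine cauchySeq_apply_of_mem_closure hF (S := Set.range A) ?_ ?_
    · rintro _ ⟨x, rfl⟩
      exact hR x
    · exact Submodule.starProjection_apply_mem K y
  have h2 : CauchySeq fun n => F n (y - K.starProjection y) := by
    refine hN _ (map_eq_zero_of_inner_map_eq_zero hA fun w => ?_)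
    exact Submodule.starProjection_inner_eq_zero y _
      (Submodule.le_topologicalClosure _ ⟨w, rfl⟩)
  convert h1.add h2 using 2 with n
  simp

/-- Uniformly bounded operators map null sequences to null sequences. -/
lemma tendsto_apply_zero {F : ℕ → X →L[ℂ] X} {C : ℝ} (hF : ∀ n, ‖F n‖ ≤ C) {u : ℕ → X}
    (hu : Tendsto u atTop (𝓝 0)) : Tendsto (fun n => F n (u n)) atTop (𝓝 0) := by
  refine squeeze_zero_norm (fun n => (F n).le_of_opNorm_le (hF n) (u n)) ?_
  simpa using hu.norm.const_mul C

/-- Strong convergence of uniformly bounded operators is jointly sequentially continuous. -/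
lemma tendsto_apply_apply {F : ℕ → X →L[ℂ] X} {C : ℝ} (hF : ∀ n, ‖F n‖ ≤ C) {u : ℕ → X} {x y : X}
    (hu : Tendsto u atTop (𝓝 x)) (hx : Tendsto (fun n => F n x) atTop (𝓝 y)) :
    Tendsto (fun n => F n (u n)) atTop (𝓝 y) := by
  simpa using (tendsto_apply_zero hF (tendsto_sub_nhds_zero_iff.2 hu)).add hx

/-- Abstract form of the convergence assertion: only the strong convergence of the symmetric
operators `Aₙ` to `A` matters, not that they are compressions of `A`. -/
lemma exists_moorePenroseInv_tendsto {A : X →L[ℂ] X} (hA : ∀ x y, ⟪A x, y⟫_ℂ = ⟪x, A y⟫_ℂ)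
    {An Bn : ℕ → X →L[ℂ] X} (hsym : ∀ n x y, ⟪An n x, y⟫_ℂ = ⟪x, An n y⟫_ℂ)
    {C : ℝ} (hC : ∀ n, ‖An n‖ ≤ C) (hlim : ∀ x, Tendsto (fun n => An n x) atTop (𝓝 (A x)))
    (hBn : ∀ n, IsMoorePenroseInvB (An n) (Bn n)) {M : ℝ} (hM : ∀ n, ‖Bn n‖ ≤ M) :
    ∃ B : X → X, IsMoorePenroseInvB A B ∧ ∀ y, Tendsto (fun n => Bn n y) atTop (𝓝 (B y)) := by
  have hQ : ∀ n, ‖Bn n ∘L An n‖ ≤ M * C := fun n =>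
    (ContinuousLinearMap.opNorm_comp_le _ _).trans
      (mul_le_mul (hM n) (hC n) (norm_nonneg _) ((norm_nonneg _).trans (hM n)))
  have hdiff : ∀ x, Tendsto (fun n => A x - An n x) atTop (𝓝 0) := fun x => by
    simpa using (hlim x).const_sub (A x)
  have hker : ∀ z, A z = 0 → Tendsto (fun n => Bn n (An n z)) atTop (𝓝 0) := fun z hz =>
    tendsto_apply_zero hM (hz ▸ hlim z)
  have hQc : ∀ x, CauchySeq fun n => (Bn n ∘L An n) x := by
    refine cauchySeq_apply_of_range_of_ker hA hQ (fun x => ?_) fun z hz => (hker z hz).cauchySeq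
    have h1 := (tendsto_apply_zero hQ (hdiff x)).add (hlim x)
    refine (h1.congr fun n => ?_).cauchySeq
    simp [(hBn n).inv_map_map (hsym n)]
  have hBc : ∀ y, CauchySeq fun n => Bn n y := by
    refine cauchySeq_apply_of_range_of_ker hA hM (fun x => ?_) fun z hz => ?_
    · have h1 := (tendsto_apply_zero hM (hdiff x)).cauchySeq.add (hQc x)
      rwa [show (fun n => Bn n (A x - An n x)) + (fun n => (Bn n ∘L An n) x) =
        fun n => Bn n (A x) by ext n; simp] at h1
    · have h1 := tendsto_apply_zero hM (hker z hz)
      exact (h1.congr fun n => (hBn n).inv_inv_map (hsym n) z).cauchySeq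
  choose B hB using fun y => cauchySeq_tendsto_of_complete (hBc y)
  refine ⟨B, fun y => ⟨fun z hz => ?_, fun w => ?_⟩, hB⟩
  · have h1 : Tendsto (fun n => ⟪Bn n y, Bn n (An n z)⟫_ℂ) atTop (𝓝 0) := by
      simpa using (hB y).inner (hker z hz)
    refine tendsto_nhds_unique ((hB y).inner tendsto_const_nhds) (h1.congr fun n => ?_)
    -- `z - Bₙ Aₙ z` lies in the kernel of `Aₙ`, to which `Bₙ y` is orthogonal
    have h2 := ((hBn n) y).1 (z - Bn n (An n z)) (by rw [map_sub, (hBn n).map_inv_map, sub_self])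
    rw [inner_sub_right, sub_eq_zero] at h2
    exact h2.symm
  · have h1 := (tendsto_const_nhds (x := y)).sub (tendsto_apply_apply hC (hB y) (hlim (B y)))
    refine tendsto_nhds_unique (h1.inner (hlim w)) (tendsto_const_nhds.congr fun n => ?_)
    exact (((hBn n) y).2 w).symm

/-- (Du–Gan) Let `A` be bounded self-adjoint, `X₁ ⊆ X₂ ⊆ ⋯` an increasing
sequence of finite-dimensional subspaces with dense union, `Pₙ` the orthogonal projection
onto `Xₙ`, and `Aₙ := Pₙ A Pₙ` (finite rank, so `R(Aₙ)` closed, with Moore–Penrose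
inverses `Bn n`).  Then `D(A†) = X` (equivalently `R(A)` closed) together with the strong
convergence `Aₙ† y → A† y` holds iff `sup_n ‖Aₙ†‖ < ∞`. -/
theorem galerkin_mp_inverse_strong_convergence_iff_uniform_bound
    (A : X →L[ℂ] X) (hA : IsSelfAdjoint A)
    (Xn : ℕ → Submodule ℂ X) (hfin : ∀ n, FiniteDimensional ℂ (Xn n))
    (hmono : ∀ n, Xn n ≤ Xn (n + 1))
    (hdense : Dense (⋃ n, (Xn n : Set X)))
    (Pn : ℕ → X →L[ℂ] X) (hPn : ∀ n, IsOrthProjOn (Xn n : Set X) (Pn n))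
    (An : ℕ → X →L[ℂ] X) (hAn : ∀ n, An n = Pn n ∘L A ∘L Pn n)
    (Bn : ℕ → X →L[ℂ] X) (hBn : ∀ n, IsMoorePenroseInvB (An n) (Bn n)) :
    (IsClosed (Set.range A) ∧
        ∃ B : X → X, IsMoorePenroseInvB A B ∧
          ∀ y : X, Tendsto (fun n => Bn n y) atTop (𝓝 (B y))) ↔
      ∃ M : ℝ, ∀ n, ‖Bn n‖ ≤ M := by
  have hAs : ∀ x y, ⟪A x, y⟫_ℂ = ⟪x, A y⟫_ℂ := hA.isSymmetric
  have hP : ∀ n, Pn n = (Xn n).starProjection := fun n => by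
    ext x
    exact (Submodule.eq_starProjection_of_mem_of_inner_eq_zero
      ((hPn n) x).1 ((hPn n) x).2).symm
  have hP1 : ∀ n, ‖Pn n‖ ≤ 1 := fun n => hP n ▸ Submodule.starProjection_norm_le _
  have hPs : ∀ n x y, ⟪Pn n x, y⟫_ℂ = ⟪x, Pn n y⟫_ℂ := fun n x y => by
    rw [hP n]
    exact Submodule.inner_starProjection_left_eq_right _ x y
  have hmono' : Monotone Xn := monotone_nat_of_le_succ hmono
  have hPlim : ∀ x, Tendsto (fun n => Pn n x) atTop (𝓝 x) := fun x => by
    simp only [hP]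
    refine Submodule.starProjection_tendsto_self Xn hmono' x fun v _ => ?_
    have hv : v ∈ closure (⋃ n, (Xn n : Set X)) := hdense v
    rw [← SetLike.mem_coe, Submodule.topologicalClosure_coe,
      Submodule.coe_iSup_of_directed _ hmono'.directed_le]
    exact hv
  constructor
  · rintro ⟨-, B, -, hlim⟩
    refine banach_steinhaus fun y => ?_
    obtain ⟨c, hc⟩ := (hlim y).norm.bddAbove_range
    exact ⟨c, fun n => hc ⟨n, rfl⟩⟩
  · rintro ⟨M, hM⟩
    have hsym : ∀ n x y, ⟪An n x, y⟫_ℂ = ⟪x, An n y⟫_ℂ := fun n x y => by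
      simp [hAn, hPs, hAs]
    have hC : ∀ n, ‖An n‖ ≤ 1 * (‖A‖ * 1) := fun n => by
      rw [hAn]
      refine (ContinuousLinearMap.opNorm_comp_le _ _).trans ?_
      refine mul_le_mul (hP1 n) ?_ (norm_nonneg _) zero_le_one
      exact (ContinuousLinearMap.opNorm_comp_le _ _).trans
        (mul_le_mul_of_nonneg_left (hP1 n) (norm_nonneg _))
    have hlim : ∀ x, Tendsto (fun n => An n x) atTop (𝓝 (A x)) := fun x => by
      simp only [hAn]
      exact tendsto_apply_apply hP1 ((A.continuous.tendsto x).comp (hPlim x)) (hPlim (A x))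
    obtain ⟨B, hB, hBlim⟩ := exists_moorePenroseInv_tendsto hAs hsym hC hlim hBn hM
    exact ⟨hB.isClosed_range, B, hB, hBlim⟩
end

section
/- Let X be a complex Hilbert space, let A be a (possibly unbounded) self-adjoint operator on X, and let (A_n) be self-adjoint operators on X with closed ranges R(A_n). Assume s-lim_{n→∞} G(A_n) = G(A) and sup_n ‖A_n†‖ < +∞. If y_n ∈ R(A_n) for all n and y_n → y in norm, then y ∈ R(A) and s-lim_{n→∞} A_n^{-1}(y_n) = A^{-1}(y), where A^{-1}(y) := {x ∈ D(A) : Ax = y} and A_n^{-1}(y_n) := {x ∈ D(A_n) : A_n x = y_n}; i.e., x satisfies Ax = y if and only if there exist x_n with A_n x_n = y_n and x_n → x in norm. -/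
/-!
Every solution `x` of `A x = y` is a limit of solutions `xₙ` of `Aₙ xₙ = yₙ`: approximate
`(x, y)` by `(uₙ, Aₙ uₙ) ∈ G(Aₙ)` and correct `uₙ` by `Bₙ (Aₙ uₙ - yₙ)`, which tends to `0` because
the `Bₙ` are uniformly bounded and which `Aₙ` maps to `Aₙ uₙ - yₙ`, an element of `R(Aₙ)`
(`IsMoorePenroseInv.map_eq`). The converse implication is the inclusion `s-lim G(Aₙ) ⊆ G(A)`.

That `y ∈ R(A)` is a weak compactness argument. The sequence `Bₙ yₙ` is bounded, so by
Banach–Alaoglu it has a weak limit `x` along the hyperfilter on `ℕ` (`exists_weak_limit`); an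
ultrafilter is used instead of a subsequence so that no separability is needed. Symmetry of `Aₙ`
gives `⟪yₙ, uₙ⟫ = ⟪Bₙ yₙ, Aₙ uₙ⟫` for `uₙ ∈ D(Aₙ)`; letting `(uₙ, Aₙ uₙ) → (u, A u)` gives
`⟪y, u⟫ = ⟪x, A u⟫` for all `u ∈ D(A)`, i.e. `A† x = y` (adjoint), and `A` is self-adjoint
(`IsSelfAdjoint.apply_eq_of_inner`).
-/


open Filter Topology
open scoped InnerProductSpace

variable {X : Type*} [NormedAddCommGroup X] [InnerProductSpace ℂ X] [CompleteSpace X]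

/-- The range of a partially defined linear operator, as a set. -/
def pRange (T : X →ₗ.[ℂ] X) : Set X := {y | ∃ x : T.domain, T x = y}

/-- The kernel of a partially defined linear operator, as a set. -/
def pKer (T : X →ₗ.[ℂ] X) : Set X := {x | ∃ h : x ∈ T.domain, T ⟨x, h⟩ = 0}

/-- `B` (defined on all of `X`) is the Moore–Penrose inverse of `T`:
for every `y`, `B y ∈ D(T) ∩ N(T)ᗮ` and `T (B y) = P_{cl R(T)} y`, the latter being
expressed by `T (B y) ∈ R(T)` together with `y - T (B y) ⟂ R(T)`.
The existence of such an everywhere-defined `B` encodes `D(T†) = X`. -/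
def IsMoorePenroseInv (T : X →ₗ.[ℂ] X) (B : X → X) : Prop :=
  ∀ y : X, ∃ h : B y ∈ T.domain,
    (∀ z ∈ pKer T, ⟪B y, z⟫_ℂ = 0) ∧
    (∀ w ∈ pRange T, ⟪y - T ⟨B y, h⟩, w⟫_ℂ = 0)

/-- `R : X → X` is the (everywhere-defined) resolvent of `T` at `l`, i.e. a right inverse
of `l • I - T`.  For a self-adjoint `T` and nonreal `l` this determines `R` uniquely. -/
def IsResolventAt (T : X →ₗ.[ℂ] X) (l : ℂ) (R : X → X) : Prop :=
  ∀ x : X, ∃ h : R x ∈ T.domain, l • R x - T ⟨R x, h⟩ = x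

/-- Resolvent consistency: for every nonreal `l`, the resolvents of `Aₙ` at `l` converge
strongly to the resolvent of `A` at `l`. -/
def ResolventConsistent (An : ℕ → X →ₗ.[ℂ] X) (A : X →ₗ.[ℂ] X) : Prop :=
  ∀ l : ℂ, l.im ≠ 0 → ∀ (R : X → X) (Rn : ℕ → X → X),
    IsResolventAt A l R → (∀ n, IsResolventAt (An n) l (Rn n)) →
    ∀ x : X, Tendsto (fun n => Rn n x) atTop (𝓝 (R x))

/-- `s-lim Sₙ`: the set of all strong (norm) limits of sequences `xₙ ∈ Sₙ`. -/
def sLim {Y : Type*} [TopologicalSpace Y] (S : ℕ → Set Y) : Set Y :=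
  {x | ∃ u : ℕ → Y, (∀ n, u n ∈ S n) ∧ Tendsto u atTop (𝓝 x)}

/-- Weak convergence of a sequence in a Hilbert space. -/
def WeakTendsto (u : ℕ → X) (x : X) : Prop :=
  ∀ z : X, Tendsto (fun n => ⟪u n, z⟫_ℂ) atTop (𝓝 ⟪x, z⟫_ℂ)

/-- `w-l̃im Sₙ`: the set of all weak limits of sequences `x_j ∈ S_{k_j}` along subsequences. -/
def wLim (S : ℕ → Set X) : Set X :=
  {x | ∃ k : ℕ → ℕ, StrictMono k ∧ ∃ u : ℕ → X, (∀ j, u j ∈ S (k j)) ∧ WeakTendsto u x}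

theorem IsMoorePenroseInv.map_eq {T : X →ₗ.[ℂ] X} {B : X → X} (hB : IsMoorePenroseInv T B)
    {y : X} (hy : y ∈ pRange T) : ∃ h : B y ∈ T.domain, T ⟨B y, h⟩ = y := by
  obtain ⟨h, -, horth⟩ := hB y
  obtain ⟨x, rfl⟩ := hy
  refine ⟨h, ?_⟩
  -- The residual `T x - T (B (T x))` lies in `R(T)` and is orthogonal to it.
  have h0 := horth (T x - T ⟨B (T x), h⟩) ⟨x - ⟨B (T x), h⟩, T.map_sub _ _⟩
  exact (sub_eq_zero.1 (inner_self_eq_zero.1 h0)).symm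

/-- A bounded sequence in a Hilbert space converges weakly along the hyperfilter on `ℕ`. -/
theorem exists_weak_limit (x : ℕ → X) (C : ℝ) (hx : ∀ n, ‖x n‖ ≤ C) :
    ∃ x₀ : X, ∀ z : X, Tendsto (fun n => ⟪x n, z⟫_ℂ) (hyperfilter ℕ : Filter ℕ)
      (𝓝 ⟪x₀, z⟫_ℂ) := by
  let f : ℕ → WeakDual ℂ X := fun n => StrongDual.toWeakDual (InnerProductSpace.toDual ℂ X (x n))
  obtain ⟨φ, -, hφ⟩ := (WeakDual.isCompact_closedBall (𝕜 := ℂ) (E := X) 0 C).ultrafilter_le_nhds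
    ((hyperfilter ℕ).map f) (by
      refine le_principal_iff.2 (Filter.mem_map.2 (Filter.univ_mem' fun n => ?_))
      have : ‖InnerProductSpace.toDual ℂ X (x n)‖ ≤ C := by
        simpa using hx n
      simpa [f] using this)
  refine ⟨(InnerProductSpace.toDual ℂ X).symm (WeakDual.toStrongDual φ), fun z => ?_⟩
  have h := ((WeakDual.eval_continuous (𝕜 := ℂ) z).tendsto φ).comp
    (show Tendsto f (hyperfilter ℕ : Filter ℕ) (𝓝 φ) from hφ)
  rw [InnerProductSpace.toDual_symm_apply]
  exact h

/-- Weak convergence of a bounded sequence pairs with norm convergence. -/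
theorem tendsto_inner_of_weak {l : Filter ℕ} {x v : ℕ → X} {x₀ v₀ : X} {C : ℝ}
    (hx : ∀ n, ‖x n‖ ≤ C) (hw : ∀ z : X, Tendsto (fun n => ⟪x n, z⟫_ℂ) l (𝓝 ⟪x₀, z⟫_ℂ))
    (hv : Tendsto v l (𝓝 v₀)) : Tendsto (fun n => ⟪x n, v n⟫_ℂ) l (𝓝 ⟪x₀, v₀⟫_ℂ) := by
  have h0 : Tendsto (fun n => ⟪x n, v n - v₀⟫_ℂ) l (𝓝 0) := by
    have h1 : Tendsto (fun n => C * ‖v n - v₀‖) l (𝓝 0) := by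
      simpa using (tendsto_iff_norm_sub_tendsto_zero.1 hv).const_mul C
    refine squeeze_zero_norm (fun n => (norm_inner_le_norm _ _).trans ?_) h1
    exact mul_le_mul_of_nonneg_right (hx n) (norm_nonneg _)
  have h2 := (hw v₀).add h0
  simpa [← inner_add_right] using h2

theorem IsSelfAdjoint.inner_apply_eq {T : X →ₗ.[ℂ] X} (hT : IsSelfAdjoint T)
    (x y : T.domain) : ⟪T x, (y : X)⟫_ℂ = ⟪(x : X), T y⟫_ℂ := by
  have h := LinearPMap.adjoint_isFormalAdjoint hT.dense_domain
  rw [LinearPMap.isSelfAdjoint_def.1 hT] at h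
  exact h x y

/-- A weak solution of `T x = y` is a solution, by maximality of the adjoint. -/
theorem IsSelfAdjoint.apply_eq_of_inner {T : X →ₗ.[ℂ] X} (hT : IsSelfAdjoint T) {x y : X}
    (h : ∀ u : T.domain, ⟪y, (u : X)⟫_ℂ = ⟪x, T u⟫_ℂ) :
    ∃ hx : x ∈ T.domain, T ⟨x, hx⟩ = y := by
  have hx := LinearPMap.mem_adjoint_domain_of_exists x ⟨y, h⟩
  have he := LinearPMap.adjoint_apply_eq hT.dense_domain ⟨x, hx⟩ h
  have hg : (x, y) ∈ T.adjoint.graph := (LinearPMap.mem_graph_iff' _).2 ⟨⟨x, hx⟩, by rw [he]⟩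
  rw [LinearPMap.isSelfAdjoint_def.1 hT, LinearPMap.mem_graph_iff'] at hg
  obtain ⟨u, hu⟩ := hg
  obtain ⟨rfl, rfl⟩ := Prod.mk.inj hu
  exact ⟨u.2, rfl⟩

/-- Under strong graph convergence and the uniform bound on the
Moore–Penrose inverses, if `yₙ ∈ R(Aₙ)` and `yₙ → y`, then `y ∈ R(A)` and
`s-lim Aₙ⁻¹(yₙ) = A⁻¹(y)` as solution sets: `A x = y` iff there exist `xₙ` with
`Aₙ xₙ = yₙ` and `xₙ → x` in norm. -/
theorem solution_sets_strong_convergence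
    (A : X →ₗ.[ℂ] X) (hA : IsSelfAdjoint A)
    (An : ℕ → X →ₗ.[ℂ] X) (hAn : ∀ n, IsSelfAdjoint (An n))
    (hRanClosed : ∀ n, IsClosed (pRange (An n)))
    (Bn : ℕ → X →L[ℂ] X) (hBn : ∀ n, IsMoorePenroseInv (An n) (Bn n))
    (hgraph : sLim (fun n => ((An n).graph : Set (X × X))) = (A.graph : Set (X × X)))
    (hbound : ∃ M : ℝ, ∀ n, ‖Bn n‖ ≤ M)
    (y : X) (yn : ℕ → X) (hyn : ∀ n, yn n ∈ pRange (An n))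
    (hy : Tendsto yn atTop (𝓝 y)) :
    y ∈ pRange A ∧
      ∀ x : X, (∃ h : x ∈ A.domain, A ⟨x, h⟩ = y) ↔
        ∃ xs : ℕ → X, (∀ n, ∃ h : xs n ∈ (An n).domain, An n ⟨xs n, h⟩ = yn n) ∧
          Tendsto xs atTop (𝓝 x) := by
  obtain ⟨M, hM⟩ := hbound
  -- `G(A) ⊆ s-lim G(Aₙ)`, in coordinates.
  have happrox : ∀ u : A.domain, ∃ un : ∀ n, (An n).domain,
      Tendsto (fun n => (un n : X)) atTop (𝓝 (u : X)) ∧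
      Tendsto (fun n => An n (un n)) atTop (𝓝 (A u)) := by
    intro u
    have hu : ((u : X), A u) ∈ sLim (fun n => ((An n).graph : Set (X × X))) := by
      rw [hgraph]; exact A.mem_graph u
    obtain ⟨p, hp, hlim⟩ := hu
    choose un hun using fun n => (LinearPMap.mem_graph_iff _).1 (hp n)
    refine ⟨un, ?_, ?_⟩
    · simpa only [(hun _).1, Function.comp_def] using (continuous_fst.tendsto _).comp hlim
    · simpa only [(hun _).2, Function.comp_def] using (continuous_snd.tendsto _).comp hlim
  refine ⟨?_, fun x => ⟨?_, ?_⟩⟩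
  · obtain ⟨C, hC⟩ := hy.norm.bddAbove_range
    have hbd : ∀ n, ‖Bn n (yn n)‖ ≤ M * C := fun n =>
      (Bn n).le_of_opNorm_le_of_le (hM n) (hC ⟨n, rfl⟩)
    obtain ⟨x, hx⟩ := exists_weak_limit (fun n => Bn n (yn n)) _ hbd
    have hle : (hyperfilter ℕ : Filter ℕ) ≤ atTop := Nat.hyperfilter_le_atTop
    obtain ⟨hxd, hAx⟩ := hA.apply_eq_of_inner (x := x) (y := y) fun u => by
      obtain ⟨un, hu, hAu⟩ := happrox u
      have h1 := (hy.inner hu (𝕜 := ℂ)).mono_left hle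
      have h2 := tendsto_inner_of_weak hbd hx (hAu.mono_left hle)
      refine tendsto_nhds_unique h1 (h2.congr fun n => ?_)
      obtain ⟨hd, he⟩ := (hBn n).map_eq (hyn n)
      rw [← (hAn n).inner_apply_eq ⟨_, hd⟩ (un n), he]
    exact ⟨⟨x, hxd⟩, hAx⟩
  · rintro ⟨hx, rfl⟩
    obtain ⟨un, hu, hAu⟩ := happrox ⟨x, hx⟩
    have hcorr : ∀ n, ∃ h : Bn n (An n (un n) - yn n) ∈ (An n).domain,
        An n ⟨_, h⟩ = An n (un n) - yn n := fun n => by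
      obtain ⟨w, hw⟩ := hyn n
      exact (hBn n).map_eq ⟨un n - w, by rw [LinearPMap.map_sub, hw]⟩
    refine ⟨fun n => un n - Bn n (An n (un n) - yn n), fun n => ?_, ?_⟩
    · obtain ⟨hd, he⟩ := hcorr n
      refine ⟨(An n).domain.sub_mem (un n).2 hd, ?_⟩
      have h := (An n).map_sub (un n) ⟨_, hd⟩
      rw [he, sub_sub_cancel] at h
      exact h
    · have h0 : Tendsto (fun n => Bn n (An n (un n) - yn n)) atTop (𝓝 0) := by
        have h1 : Tendsto (fun n => M * ‖An n (un n) - yn n‖) atTop (𝓝 0) := by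
          simpa using (hAu.sub hy).norm.const_mul M
        exact squeeze_zero_norm (fun n => (Bn n).le_of_opNorm_le (hM n) _) h1
      simpa using hu.sub h0
  · rintro ⟨xs, hxs, hlim⟩
    have hg : (x, y) ∈ (A.graph : Set (X × X)) := by
      rw [← hgraph]
      refine ⟨fun n => (xs n, yn n), fun n => ?_, hlim.prodMk_nhds hy⟩
      obtain ⟨h, he⟩ := hxs n
      exact (LinearPMap.mem_graph_iff' _).2 ⟨⟨xs n, h⟩, by rw [he]⟩
    obtain ⟨u, hu⟩ := (LinearPMap.mem_graph_iff' _).1 hg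
    obtain ⟨rfl, rfl⟩ := Prod.mk.inj hu
    exact ⟨u.2, rfl⟩
end

section
/- Let X be a complex Hilbert space, let A be a (possibly unbounded) self-adjoint operator on X, and let (A_n) be self-adjoint operators on X with closed ranges R(A_n). Assume s-lim_{n→∞} G(A_n) = G(A) and sup_n ‖A_n†‖ < +∞. Then s-lim_{n→∞} N(A_n) = w-l̃im_{n→∞} N(A_n) = N(A), and the orthogonal projections converge strongly: P_{N(A_n)} x → P_{N(A)} x in norm for every x ∈ X. -/
/-!
The kernel of a self-adjoint operator is the orthogonal complement of its range
(`mem_pKer_iff`), and everything is transported along graph convergence.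

* A kernel vector `x` of `A` is the limit of some `xₙ` with `Aₙ xₙ → 0`. The corrected vectors
  `xₙ - Aₙ† Aₙ xₙ` lie in `N(Aₙ)`, and the correction tends to zero because the `Aₙ†` are
  uniformly bounded. Hence `N(A) ⊆ s-lim N(Aₙ)` (`pKer_subset_sLim`).
* A weak limit of kernel vectors is orthogonal to `R(A)`: every `A u` is a strong limit of
  elements of `R(Aₙ)`, and the pairing of a weakly with a strongly convergent sequence converges.
  Hence `w-l̃im N(Aₙ) ⊆ N(A)` (`wLim_subset_pKer`).
* For the projections, split `x = P x + y` with `y ∈ N(A)ᗮ = cl R(A)`. Approximate `y` by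
  `v ∈ R(A)`, and pick `wₙ ∈ N(Aₙ)`, `vₙ ∈ R(Aₙ)` with `wₙ → P x`, `vₙ → v`. As `vₙ` is orthogonal
  to `N(Aₙ)`, the projection of `x - wₙ - vₙ` onto `N(Aₙ)` is `Pₙ x - wₙ`, so
  `‖Pₙ x - wₙ‖ ≤ ‖x - wₙ - vₙ‖ → ‖y - v‖`. No weak compactness is needed.
-/

open Filter Topology
open scoped InnerProductSpace

variable {X : Type*} [NormedAddCommGroup X] [InnerProductSpace ℂ X] [CompleteSpace X]

theorem sub_mem_pKer {T : X →ₗ.[ℂ] X} {x y : X} (hx : x ∈ pKer T) (hy : y ∈ pKer T) :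
    x - y ∈ pKer T := by
  obtain ⟨hx, hx0⟩ := hx
  obtain ⟨hy, hy0⟩ := hy
  refine ⟨T.domain.sub_mem hx hy, ?_⟩
  have h := T.map_sub ⟨x, hx⟩ ⟨y, hy⟩
  rw [hx0, hy0, sub_zero] at h
  exact h

/-- For a self-adjoint operator, `N(A) = R(A)ᗮ`. -/
theorem mem_pKer_iff {A : X →ₗ.[ℂ] X} (hA : IsSelfAdjoint A) {x : X} :
    x ∈ pKer A ↔ ∀ w ∈ pRange A, ⟪x, w⟫_ℂ = 0 := by
  have hd := hA.dense_domain
  have hA' : A.adjoint = A := LinearPMap.isSelfAdjoint_def.mp hA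
  constructor
  · rintro ⟨hx, hx0⟩ w ⟨u, rfl⟩
    have h := LinearPMap.adjoint_isFormalAdjoint hd
    rw [hA'] at h
    have := h ⟨x, hx⟩ u
    rw [hx0, inner_zero_left] at this
    exact this.symm
  · intro h
    have h0 : ∀ u : A.domain, ⟪(0 : X), (u : X)⟫_ℂ = ⟪x, A u⟫_ℂ := fun u => by
      rw [inner_zero_left, h _ ⟨u, rfl⟩]
    have hx : x ∈ A.adjoint.domain := LinearPMap.mem_adjoint_domain_of_exists x ⟨0, h0⟩
    have hx0 : A.adjoint ⟨x, hx⟩ = 0 := LinearPMap.adjoint_apply_eq hd ⟨x, hx⟩ h0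
    have : x ∈ pKer A.adjoint := ⟨hx, hx0⟩
    rwa [hA'] at this

/-- For a self-adjoint operator, `N(A)ᗮ` is contained in the closure of `R(A)`. -/
theorem mem_closure_pRange {A : X →ₗ.[ℂ] X} (hA : IsSelfAdjoint A) {y : X}
    (hy : ∀ z ∈ pKer A, ⟪y, z⟫_ℂ = 0) : y ∈ closure (pRange A) := by
  have hR : pRange A = (LinearMap.range A.toFun : Set X) := rfl
  rw [hR, ← Submodule.topologicalClosure_coe, ← Submodule.orthogonal_orthogonal_eq_closure]
  refine (Submodule.mem_orthogonal' _ _).2 fun z hz => hy z ?_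
  exact (mem_pKer_iff hA).2 fun w hw => (Submodule.mem_orthogonal' _ _).1 hz w hw

/-- Subtracting `T† T u` from `u` leaves a kernel vector of `T`. -/
theorem sub_moorePenrose_mem_pKer {T : X →ₗ.[ℂ] X} {B : X → X} (hB : IsMoorePenroseInv T B)
    (u : T.domain) : (u : X) - B (T u) ∈ pKer T := by
  obtain ⟨h, -, h2⟩ := hB (T u)
  have hs : T (u - ⟨B (T u), h⟩) = T u - T ⟨B (T u), h⟩ := T.map_sub _ _
  refine ⟨T.domain.sub_mem u.2 h, ?_⟩
  -- The residual `T u - T (B (T u))` lies in `R(T)` and is orthogonal to it.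
  have h0 := h2 _ ⟨u - ⟨B (T u), h⟩, hs⟩
  exact hs.trans (inner_self_eq_zero.1 h0)

/-- Graph convergence, in terms of operators: every `(u, A u)` is the limit of some
`(uₙ, Aₙ uₙ)`. -/
theorem exists_tendsto_of_graph {A : X →ₗ.[ℂ] X} {An : ℕ → X →ₗ.[ℂ] X}
    (hgraph : sLim (fun n => ((An n).graph : Set (X × X))) = (A.graph : Set (X × X)))
    (u : A.domain) : ∃ un : ∀ n, (An n).domain,
      Tendsto (fun n => (un n : X)) atTop (𝓝 (u : X)) ∧
      Tendsto (fun n => An n (un n)) atTop (𝓝 (A u)) := by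
  have hu : ((u : X), A u) ∈ sLim (fun n => ((An n).graph : Set (X × X))) := by
    rw [hgraph]
    exact A.mem_graph u
  obtain ⟨p, hp, hlim⟩ := hu
  choose un h1 h2 using fun n => (LinearPMap.mem_graph_iff (An n)).1 (hp n)
  refine ⟨un, ?_, ?_⟩
  · simp only [h1]
    exact (continuous_fst.tendsto _).comp hlim
  · simp only [h2]
    exact (continuous_snd.tendsto _).comp hlim

theorem pKer_subset_sLim {A : X →ₗ.[ℂ] X} {An : ℕ → X →ₗ.[ℂ] X} {Bn : ℕ → X →L[ℂ] X}
    (hBn : ∀ n, IsMoorePenroseInv (An n) (Bn n))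
    (hgraph : sLim (fun n => ((An n).graph : Set (X × X))) = (A.graph : Set (X × X)))
    (hbound : ∃ M : ℝ, ∀ n, ‖Bn n‖ ≤ M) :
    pKer A ⊆ sLim (fun n => pKer (An n)) := by
  rintro x ⟨hx, hx0⟩
  obtain ⟨un, h1, h2⟩ := exists_tendsto_of_graph hgraph ⟨x, hx⟩
  obtain ⟨M, hM⟩ := hbound
  rw [hx0] at h2
  refine ⟨fun n => un n - Bn n (An n (un n)), fun n => sub_moorePenrose_mem_pKer (hBn n) _, ?_⟩
  have h3 : Tendsto (fun n => Bn n (An n (un n))) atTop (𝓝 0) := by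
    refine squeeze_zero_norm (a := fun n => M * ‖An n (un n)‖)
      (fun n => (Bn n).le_of_opNorm_le (hM n) _) ?_
    simpa using h2.norm.const_mul M
  simpa using h1.sub h3

theorem sLim_subset_wLim (S : ℕ → Set X) : sLim S ⊆ wLim S := by
  rintro x ⟨u, hu, hlim⟩
  exact ⟨id, strictMono_id, u, hu, fun z => hlim.inner tendsto_const_nhds⟩

/-- Weakly convergent sequences are bounded, by the uniform boundedness principle. -/
theorem WeakTendsto.exists_norm_le {u : ℕ → X} {x : X} (h : WeakTendsto u x) :
    ∃ C, ∀ n, ‖u n‖ ≤ C := by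
  obtain ⟨C, hC⟩ := banach_steinhaus (g := fun n => innerSL ℂ (u n)) fun z => by
    obtain ⟨C, hC⟩ := (h z).norm.bddAbove_range
    exact ⟨C, fun n => hC ⟨n, rfl⟩⟩
  exact ⟨C, fun n => by simpa using hC n⟩

theorem WeakTendsto.inner {u v : ℕ → X} {x y : X} (hu : WeakTendsto u x)
    (hv : Tendsto v atTop (𝓝 y)) :
    Tendsto (fun n => ⟪u n, v n⟫_ℂ) atTop (𝓝 ⟪x, y⟫_ℂ) := by
  obtain ⟨C, hC⟩ := hu.exists_norm_le
  have h0 : Tendsto (fun n => ⟪u n, v n - y⟫_ℂ) atTop (𝓝 0) := by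
    refine squeeze_zero_norm (a := fun n => C * ‖v n - y‖) (fun n => ?_) ?_
    · exact (norm_inner_le_norm _ _).trans (mul_le_mul_of_nonneg_right (hC n) (norm_nonneg _))
    · simpa using (hv.sub_const y).norm.const_mul C
  simpa [inner_sub_right] using h0.add (hu y)

theorem wLim_subset_pKer {A : X →ₗ.[ℂ] X} (hA : IsSelfAdjoint A)
    {An : ℕ → X →ₗ.[ℂ] X} (hAn : ∀ n, IsSelfAdjoint (An n))
    (hgraph : sLim (fun n => ((An n).graph : Set (X × X))) = (A.graph : Set (X × X))) :
    wLim (fun n => pKer (An n)) ⊆ pKer A := by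
  rintro x ⟨k, hk, u, hu, hlim⟩
  refine (mem_pKer_iff hA).2 ?_
  rintro _ ⟨a, rfl⟩
  obtain ⟨an, -, h2⟩ := exists_tendsto_of_graph hgraph a
  have h := hlim.inner (h2.comp hk.tendsto_atTop)
  have h0 : ∀ j, ⟪u j, An (k j) (an (k j))⟫_ℂ = 0 := fun j =>
    (mem_pKer_iff (hAn _)).1 (hu j) _ ⟨_, rfl⟩
  simp only [Function.comp_apply, h0] at h
  exact tendsto_nhds_unique h tendsto_const_nhds

/-- If `w ∈ N(T)` and `v ∈ R(T)`, then `‖Q x - w‖ ≤ ‖x - w - v‖` for the orthogonal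
projection `Q` onto `N(T)`. -/
theorem norm_proj_sub_le {T : X →ₗ.[ℂ] X} (hT : IsSelfAdjoint T) {Q : X → X}
    (hQ : IsOrthProjOn (pKer T) Q) (x : X) {w v : X} (hw : w ∈ pKer T) (hv : v ∈ pRange T) :
    ‖Q x - w‖ ≤ ‖x - w - v‖ := by
  have hd : Q x - w ∈ pKer T := sub_mem_pKer (hQ x).1 hw
  have h1 := (hQ x).2 _ hd
  have h2 : ⟪v, Q x - w⟫_ℂ = 0 := inner_eq_zero_symm.1 ((mem_pKer_iff hT).1 hd v hv)
  -- `x - w - v` is the orthogonal sum of `Q x - w` and `x - Q x - v`.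
  have h3 : ⟪x - w - v, Q x - w⟫_ℂ = ⟪Q x - w, Q x - w⟫_ℂ := by
    have : x - w - v = (x - Q x) + (Q x - w) - v := by abel
    rw [this, inner_sub_left, inner_add_left, h1, h2, zero_add, sub_zero]
  have h4 : ‖Q x - w‖ * ‖Q x - w‖ ≤ ‖x - w - v‖ * ‖Q x - w‖ := by
    have := norm_inner_le_norm (𝕜 := ℂ) (x - w - v) (Q x - w)
    rw [h3, inner_self_eq_norm_sq_to_K] at this
    simpa [sq] using this
  rcases (norm_nonneg (Q x - w)).eq_or_lt with h | h
  · rw [← h]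
    exact norm_nonneg _
  · exact le_of_mul_le_mul_right h4 h

theorem tendsto_proj {A : X →ₗ.[ℂ] X} (hA : IsSelfAdjoint A)
    {An : ℕ → X →ₗ.[ℂ] X} (hAn : ∀ n, IsSelfAdjoint (An n))
    (hgraph : sLim (fun n => ((An n).graph : Set (X × X))) = (A.graph : Set (X × X)))
    (hsub : pKer A ⊆ sLim (fun n => pKer (An n)))
    {P : X → X} {Pn : ℕ → X → X} (hP : IsOrthProjOn (pKer A) P)
    (hPn : ∀ n, IsOrthProjOn (pKer (An n)) (Pn n)) (x : X) :
    Tendsto (fun n => Pn n x) atTop (𝓝 (P x)) := by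
  obtain ⟨w, hw, hwlim⟩ := hsub (hP x).1
  suffices h : Tendsto (fun n => Pn n x - w n) atTop (𝓝 0) by
    simpa using h.add hwlim
  rw [Metric.tendsto_nhds]
  intro ε hε
  obtain ⟨_, ⟨a, rfl⟩, ha⟩ := Metric.mem_closure_iff.1 (mem_closure_pRange hA (hP x).2) ε hε
  obtain ⟨an, -, hv⟩ := exists_tendsto_of_graph hgraph a
  have hlim : Tendsto (fun n => ‖x - w n - An n (an n)‖) atTop (𝓝 ‖x - P x - A a‖) :=
    ((hwlim.const_sub x).sub hv).norm
  rw [dist_eq_norm] at ha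
  filter_upwards [hlim.eventually (gt_mem_nhds ha)] with n hn
  rw [dist_zero_right]
  exact (norm_proj_sub_le (hAn n) (hPn n) x (hw n) ⟨_, rfl⟩).trans_lt hn

/-- Under strong graph convergence and the uniform bound on the
Moore–Penrose inverses, `s-lim N(Aₙ) = w-l̃im N(Aₙ) = N(A)` and the orthogonal
projections onto the kernels converge strongly to the orthogonal projection onto
`N(A)`. -/
theorem kernel_projections_strong_convergence
    (A : X →ₗ.[ℂ] X) (hA : IsSelfAdjoint A)
    (An : ℕ → X →ₗ.[ℂ] X) (hAn : ∀ n, IsSelfAdjoint (An n))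
    (hRanClosed : ∀ n, IsClosed (pRange (An n)))
    (Bn : ℕ → X →L[ℂ] X) (hBn : ∀ n, IsMoorePenroseInv (An n) (Bn n))
    (hgraph : sLim (fun n => ((An n).graph : Set (X × X))) = (A.graph : Set (X × X)))
    (hbound : ∃ M : ℝ, ∀ n, ‖Bn n‖ ≤ M) :
    sLim (fun n => pKer (An n)) = pKer A ∧
      wLim (fun n => pKer (An n)) = pKer A ∧
      ∀ (P : X → X) (Pn : ℕ → X → X),
        IsOrthProjOn (pKer A) P → (∀ n, IsOrthProjOn (pKer (An n)) (Pn n)) →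
        ∀ x : X, Tendsto (fun n => Pn n x) atTop (𝓝 (P x)) := by
  have hK := pKer_subset_sLim hBn hgraph hbound
  have hW := wLim_subset_pKer hA hAn hgraph
  have hSW := sLim_subset_wLim (fun n => pKer (An n))
  exact ⟨(hSW.trans hW).antisymm hK, hW.antisymm (hK.trans hSW),
    fun P Pn hP hPn x => tendsto_proj hA hAn hgraph hK hP hPn x⟩
end
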